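/- Let γ > 0, p > 1, a > 0, b > 0, and suppose p(1−γ) ≤ 1. Then there exists no twice continuously differentiable function w on [0,∞) with w ≢ 0 such that for almost every t ≥ 0, w''(t) + a·w(t) ≥ b·(₀I_t^γ (|w|^p))(t). In other words, any such w defined on a maximal interval [0,T) must have T < +∞. -/

import Mathlib

/-!
The argument is by contradiction: a nontrivial global solution would have an energy
`F(T) = ∫₀ᵀ |w|^p` that is both bounded and unbounded.

*Bounded* (`energy_bounded`). For `T ≥ 1` test the inequality against the polynomial bump
`φ(t) = x² y^(n+2)`, `x = (t - T)/T`, `y = (2T - t)/T`, on `[T, 2T]`. Both `φ` and `φ'` vanish at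
the endpoints, so no initial data appear, and `|φ'' + aφ| ≤ A yⁿ` (`bump_wave_estimate`). Moving the
fractional integral onto `φ` (`fubini_frac`) produces `∫₀²ᵀ |w|^p ψ`, where `ψ ≥ c T^γ y^(n+3+γ)` on
`[T, 2T]` and `ψ ≥ c T^γ` on `[0, T]` (`adjoint_bump_lower`). For `n` large, Young's inequality
absorbs `A |w| yⁿ` into the contribution of `[T, 2T]` up to `C T^(-γ/(p-1))`, so that
`T^γ F(T) ≤ C T^(1 - γ/(p-1))`. The hypothesis `p(1-γ) ≤ 1` is exactly what makes this a uniform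
bound on `F(T)`.

*Unbounded*. Testing against `sin (√a (r - t))` on the half period `[t, t + τ]`, `τ = π/√a`,
annihilates the operator `w'' + a w` up to boundary terms and gives
`w(t) + w(t+τ) ≥ c (t+τ)^(-1/p) F(t)` (`half_period_lower`); again `γ - 1 ≥ -1/p` is used.
Since `F` is eventually bounded below by some `m > 0`, taking `p`-th powers gives
`|w(t)|^p + |w(t+τ)|^p ≥ c' / (t+τ)`, whose integral diverges logarithmically.
-/

open MeasureTheory Filter

/-- Riemann–Liouville fractional integral of order `σ` based at `0`:
`(₀I_t^σ f)(t) = (1/Γ(σ)) ∫₀ᵗ (t−s)^{σ−1} f(s) ds`. -/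
noncomputable def rlInt (σ : ℝ) (f : ℝ → ℝ) (t : ℝ) : ℝ :=
  (1 / Real.Gamma σ) * ∫ s in (0:ℝ)..t, (t - s) ^ (σ - 1) * f s

open Set intervalIntegral

/-! ### Young's inequality and Green's identity -/

/-- Young's inequality in the form needed here: a linear term is absorbed by a `p`-th power,
up to a constant. -/
lemma exists_young {A B p : ℝ} (hA : 0 < A) (hB : 0 < B) (hp : 1 < p) :
    ∃ C : ℝ, 0 < C ∧ ∀ V : ℝ, 0 ≤ V → A * V ≤ B * V ^ p + C := by
  set M : ℝ := (A / B) ^ (1 / (p - 1)) with hM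
  have hM0 : 0 < M := by positivity
  refine ⟨A * M, by positivity, fun V hV => ?_⟩
  rcases le_total V M with h | h
  · have : 0 ≤ B * V ^ p := by positivity
    nlinarith
  · have hV0 : 0 < V := hM0.trans_le h
    have h1 : A / B ≤ V ^ (p - 1) := by
      calc A / B = M ^ (p - 1) := by
            rw [hM, ← Real.rpow_mul (by positivity), one_div_mul_cancel (by linarith),
              Real.rpow_one]
        _ ≤ V ^ (p - 1) := Real.rpow_le_rpow hM0.le h (by linarith)
    have h2 : V ^ p = V ^ (p - 1) * V := by
      rw [← Real.rpow_add_one hV0.ne']; ring_nf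
    have h3 : A ≤ V ^ (p - 1) * B := (div_le_iff₀ hB).1 h1
    have h4 : 0 < A * M := by positivity
    rw [h2]
    nlinarith [mul_le_mul_of_nonneg_right h3 hV]

/-- Green's identity for the operator `w ↦ w'' + a w`. -/
lemma integral_mul_wave {w φ φ' φ'' : ℝ → ℝ} {a S E : ℝ} (hw : ContDiff ℝ 2 w)
    (h1 : ∀ t, HasDerivAt φ (φ' t) t) (h2 : ∀ t, HasDerivAt φ' (φ'' t) t)
    (hc : Continuous φ'') :
    ∫ t in S..E, φ t * (deriv (deriv w) t + a * w t) =
      (∫ t in S..E, w t * (φ'' t + a * φ t)) +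
        ((φ E * deriv w E - φ' E * w E) - (φ S * deriv w S - φ' S * w S)) := by
  have hw1 : ∀ t, HasDerivAt w (deriv w t) t := fun t =>
    (hw.differentiable (by norm_num) t).hasDerivAt
  have hw' : ContDiff ℝ 1 (deriv w) := by
    have : ContDiff ℝ (1 + 1) w := by simpa [one_add_one_eq_two] using hw
    exact (contDiff_succ_iff_deriv.1 this).2.2
  have hw2 : ∀ t, HasDerivAt (deriv w) (deriv (deriv w) t) t := fun t =>
    (hw'.differentiable (by norm_num) t).hasDerivAt
  have hcw : Continuous w := hw.continuous
  have hcw2 : Continuous (deriv (deriv w)) := hw'.continuous_deriv (by norm_num)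
  have hcφ : Continuous φ := continuous_iff_continuousAt.2 fun t => (h1 t).continuousAt
  have key := integral_eq_sub_of_hasDerivAt (a := S) (b := E)
    (f := fun t => φ t * deriv w t - φ' t * w t)
    (f' := fun t => φ t * (deriv (deriv w) t + a * w t) - w t * (φ'' t + a * φ t))
    (fun t _ => (((h1 t).mul (hw2 t)).sub ((h2 t).mul (hw1 t))).congr_deriv (by ring))
    (Continuous.intervalIntegrable (by fun_prop) _ _)
  rw [integral_sub (Continuous.intervalIntegrable (by fun_prop) _ _)
    (Continuous.intervalIntegrable (by fun_prop) _ _)] at key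
  linarith

/-! ### Moving the fractional integral onto the test function -/

/-- The kernel `r ^ (γ - 1)` cut off to `(0, E]`, which makes it integrable on `ℝ`. The cut-off at
`E` is invisible as long as all times lie in `[0, E]`. -/
noncomputable def truncKer (E γ : ℝ) : ℝ → ℝ := (Ioc 0 E).indicator fun r => r ^ (γ - 1)

lemma truncKer_nonneg (E γ r : ℝ) : 0 ≤ truncKer E γ r :=
  indicator_nonneg (fun _ hx => Real.rpow_nonneg hx.1.le _) _

lemma integrable_truncKer {E γ : ℝ} (hE : 0 ≤ E) (hγ : 0 < γ) : Integrable (truncKer E γ) := by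
  have := intervalIntegral.intervalIntegrable_rpow' (a := 0) (b := E) (r := γ - 1) (by linarith)
  rw [intervalIntegrable_iff_integrableOn_Ioc_of_le hE] at this
  exact this.integrable_indicator measurableSet_Ioc

lemma integral_truncKer {E γ t : ℝ} (ht : 0 < t) (htE : t ≤ E) (f : ℝ → ℝ) :
    ∫ s, (Ioc 0 E).indicator f s * truncKer E γ (t - s) =
      ∫ s in (0:ℝ)..t, (t - s) ^ (γ - 1) * f s := by
  rw [integral_of_le ht.le, integral_Ioc_eq_integral_Ioo, ← MeasureTheory.integral_indicator measurableSet_Ioo]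
  congr 1
  ext s
  by_cases hs : s ∈ Ioo 0 t
  · have h1 : s ∈ Ioc 0 E := ⟨hs.1, hs.2.le.trans htE⟩
    have h2 : t - s ∈ Ioc 0 E := ⟨by linarith [hs.2], by linarith [hs.1]⟩
    rw [indicator_of_mem hs, indicator_of_mem h1, truncKer, indicator_of_mem h2, mul_comm]
  · rw [indicator_of_notMem hs]
    by_cases h0 : s ∈ Ioc 0 E
    · have : t - s ∉ Ioc 0 E := fun h => hs ⟨h0.1, by linarith [h.1]⟩
      rw [truncKer, indicator_of_notMem this, mul_zero]
    · rw [indicator_of_notMem h0, zero_mul]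

/-- Exchange of the order of integration: the fractional integral of `f` tested against `φ` is `f`
tested against the backward fractional integral of `φ`. Integrability holds because the integrand
is that of a convolution of two integrable functions times a bounded function. -/
lemma fubini_frac {γ S E : ℝ} (hγ : 0 < γ) (hS : 0 ≤ S) (hSE : S ≤ E) {f φ : ℝ → ℝ}
    (hf : Continuous f) (hφ : Continuous φ) :
    IntervalIntegrable (fun t => φ t * ∫ s in (0:ℝ)..t, (t - s) ^ (γ - 1) * f s) volume S E ∧
    IntervalIntegrable (fun s => f s * ∫ t in Ioc S E, φ t * truncKer E γ (t - s)) volume 0 E ∧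
    ∫ t in S..E, φ t * ∫ s in (0:ℝ)..t, (t - s) ^ (γ - 1) * f s =
      ∫ s in (0:ℝ)..E, f s * ∫ t in Ioc S E, φ t * truncKer E γ (t - s) := by
  have hE : 0 ≤ E := hS.trans hSE
  have hfi : Integrable ((Ioc 0 E).indicator f) :=
    (hf.integrableOn_Ioc).integrable_indicator measurableSet_Ioc
  have hI := Integrable.convolution_integrand (ContinuousLinearMap.mul ℝ ℝ) hfi
    (integrable_truncKer hE hγ)
  obtain ⟨M, hM⟩ := isCompact_Icc.exists_bound_of_continuousOn (s := Icc S E) hφ.continuousOn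
  have hH : Integrable (fun q : ℝ × ℝ => (Ioc S E).indicator φ q.1 *
      ((Ioc 0 E).indicator f q.2 * truncKer E γ (q.1 - q.2))) (volume.prod volume) := by
    refine Integrable.bdd_mul (c := max M 0) (by simpa using hI) ?_ (ae_of_all _ fun q => ?_)
    · exact ((hφ.measurable.indicator measurableSet_Ioc).comp measurable_fst).aestronglyMeasurable
    · by_cases h : q.1 ∈ Ioc S E
      · rw [indicator_of_mem h]
        exact (hM _ (Ioc_subset_Icc_self h)).trans (le_max_left _ _)
      · rw [indicator_of_notMem h]; simp
  have e1 : (fun t => ∫ s, (Ioc S E).indicator φ t *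
      ((Ioc 0 E).indicator f s * truncKer E γ (t - s))) =
      (Ioc S E).indicator (fun t => φ t * ∫ s in (0:ℝ)..t, (t - s) ^ (γ - 1) * f s) := by
    ext t
    by_cases h : t ∈ Ioc S E
    · simp only [indicator_of_mem h]
      rw [MeasureTheory.integral_const_mul, integral_truncKer (hS.trans_lt h.1) h.2]
    · simp [indicator_of_notMem h]
  have e2 : (fun s => ∫ t, (Ioc S E).indicator φ t *
      ((Ioc 0 E).indicator f s * truncKer E γ (t - s))) =
      (Ioc 0 E).indicator (fun s => f s * ∫ t in Ioc S E, φ t * truncKer E γ (t - s)) := by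
    ext s
    by_cases h : s ∈ Ioc 0 E
    · simp only [indicator_of_mem h]
      rw [← MeasureTheory.integral_indicator measurableSet_Ioc, ← MeasureTheory.integral_const_mul]
      congr 1
      ext t
      by_cases h' : t ∈ Ioc S E
      · simp only [indicator_of_mem h']; ring
      · simp [indicator_of_notMem h']
    · simp [indicator_of_notMem h]
  refine ⟨?_, ?_, ?_⟩
  · rw [intervalIntegrable_iff_integrableOn_Ioc_of_le hSE, ← integrable_indicator_iff measurableSet_Ioc, ← e1]
    exact hH.integral_prod_left
  · rw [intervalIntegrable_iff_integrableOn_Ioc_of_le hE, ← integrable_indicator_iff measurableSet_Ioc, ← e2]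
    exact hH.integral_prod_right
  · rw [integral_of_le hSE, integral_of_le hE, ← MeasureTheory.integral_indicator measurableSet_Ioc,
      ← MeasureTheory.integral_indicator measurableSet_Ioc, ← e1, ← e2]
    exact integral_integral_swap hH

/-! ### The polynomial bump on `[T, 2T]` -/

/-- The polynomial test function on `[T, 2T]`, vanishing to second order at `T` and to order `n + 2`
at `2T`. It is only used on `[T, 2T]`, so it is not cut off outside. -/
noncomputable def bump (n : ℕ) (T t : ℝ) : ℝ := ((t - T) / T) ^ 2 * ((2 * T - t) / T) ^ (n + 2)

lemma continuous_bump (n : ℕ) (T : ℝ) : Continuous (bump n T) := by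
  unfold bump; fun_prop

lemma bump_nonneg {n : ℕ} {T t : ℝ} (hT : 0 < T) (ht : t ≤ 2 * T) : 0 ≤ bump n T t := by
  have : 0 ≤ (2 * T - t) / T := div_nonneg (by linarith) hT.le
  unfold bump; positivity

/-- Lower bound for the backward fractional integral of the bump at `s ≤ 2T - zT`. Only the times
`t ∈ (2T - zT/2, 2T - zT/4]` are kept: there the bump is at least `(1/2)² (z/4)^(n+2)`, and
`(t - s)^(γ-1) = (t - s)^γ / (t - s) ≥ (zT/2)^γ / (2T)` whatever the sign of `γ - 1`. -/
lemma adjoint_bump_lower {γ T s z : ℝ} (n : ℕ) (hγ : 0 < γ) (hT : 0 < T) (hs : 0 ≤ s)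
    (hz : 0 < z) (hz1 : z ≤ 1) (hsz : s ≤ 2 * T - z * T) :
    ((1 / 2) ^ γ * (1 / 4) ^ (n + 2) / 32) * T ^ γ * (z ^ (n + 3) * z ^ γ) ≤
      ∫ t in Ioc T (2 * T), bump n T t * truncKer (2 * T) γ (t - s) := by
  have hzT : z * T ≤ T := by nlinarith
  have hzT0 : 0 < z * T := by positivity
  set I := Ioc (2 * T - z * T / 2) (2 * T - z * T / 4) with hI
  have hsub : I ⊆ Ioc T (2 * T) := Ioc_subset_Ioc (by linarith) (by linarith)
  set c : ℝ := ((1 / 2) ^ 2 * (z / 4) ^ (n + 2)) * ((z * T / 2) ^ γ / (2 * T)) with hc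
  have hint : IntegrableOn (fun t => bump n T t * truncKer (2 * T) γ (t - s)) (Ioc T (2 * T)) := by
    obtain ⟨M, hM⟩ := isCompact_Icc.exists_bound_of_continuousOn (s := Icc T (2 * T))
      (continuous_bump n T).continuousOn
    refine Integrable.bdd_mul (c := M)
      ((integrable_truncKer (by linarith) hγ).comp_sub_right s).integrableOn
      (continuous_bump n T).aestronglyMeasurable ?_
    filter_upwards [ae_restrict_mem measurableSet_Ioc] with t ht
    exact hM t (Ioc_subset_Icc_self ht)
  have h1 : ∀ t ∈ I, c ≤ bump n T t * truncKer (2 * T) γ (t - s) := by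
    rintro t ⟨ht1, ht2⟩
    have hk : t - s ∈ Ioc 0 (2 * T) := ⟨by linarith, by linarith⟩
    rw [truncKer, indicator_of_mem hk]
    have e1 : (1 / 2 : ℝ) ≤ (t - T) / T := by rw [le_div_iff₀ hT]; linarith
    have e2 : z / 4 ≤ (2 * T - t) / T := by rw [le_div_iff₀ hT]; linarith
    have e3 : (z * T / 2) ^ γ / (2 * T) ≤ (t - s) ^ (γ - 1) := by
      rw [Real.rpow_sub_one hk.1.ne']
      have : 0 < t - s := hk.1
      have : z * T / 2 ≤ t - s := by linarith
      have := hk.2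
      gcongr
    have e4 : 0 ≤ (2 * T - t) / T := le_trans (by positivity) e2
    unfold bump
    rw [hc]
    gcongr
  calc ((1 / 2) ^ γ * (1 / 4) ^ (n + 2) / 32) * T ^ γ * (z ^ (n + 3) * z ^ γ)
      = c * (z * T / 4) := by
        rw [hc, show z * T / 2 = (1 / 2) * T * z by ring, Real.mul_rpow (by positivity) hz.le,
          Real.mul_rpow (by positivity) hT.le, div_pow z, div_pow 1 4, one_pow]
        field_simp
        ring
    _ = ∫ t in I, c := by
        rw [setIntegral_const, hI, Real.volume_real_Ioc_of_le (by linarith), smul_eq_mul]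
        ring
    _ ≤ ∫ t in I, bump n T t * truncKer (2 * T) γ (t - s) :=
        setIntegral_mono_on (by simp [hI]) (hint.mono_set hsub) measurableSet_Ioc h1
    _ ≤ _ := by
        refine setIntegral_mono_set hint ?_ hsub.eventuallyLE
        filter_upwards [ae_restrict_mem measurableSet_Ioc] with t ht
        exact mul_nonneg (bump_nonneg hT ht.2) (truncKer_nonneg _ _ _)

/-- Integrating by parts against the bump: the boundary terms vanish and `φ'' + aφ` is bounded by a
constant times `((2T - t)/T)ⁿ`, uniformly in `T ≥ 1`. -/
lemma bump_wave_estimate {w : ℝ → ℝ} (hw : ContDiff ℝ 2 w) {a T : ℝ} (ha : 0 < a) (hT : 1 ≤ T)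
    {n : ℕ} :
    ∫ t in T..(2 * T), bump n T t * (deriv (deriv w) t + a * w t) ≤
      ∫ t in T..(2 * T),
        (2 + 4 * ((n : ℝ) + 2) + ((n : ℝ) + 2) * (n + 1) + a) * (|w t| * ((2 * T - t) / T) ^ n) := by
  have hT0 : 0 < T := by linarith
  set x : ℝ → ℝ := fun t => (t - T) / T with hx
  set y : ℝ → ℝ := fun t => (2 * T - t) / T with hy
  have hx' : ∀ t, HasDerivAt x (1 / T) t := fun t => by
    simpa [hx] using ((hasDerivAt_id t).sub_const T).div_const T
  have hy' : ∀ t, HasDerivAt y (-1 / T) t := fun t => by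
    simpa [hy] using ((hasDerivAt_id t).const_sub (2 * T)).div_const T
  have hxc : Continuous x := by rw [hx]; fun_prop
  have hyc : Continuous y := by rw [hy]; fun_prop
  set φ' : ℝ → ℝ := fun t => (2 * x t * y t ^ (n + 2) - (n + 2) * x t ^ 2 * y t ^ (n + 1)) / T
    with hφ'
  set φ'' : ℝ → ℝ := fun t => (2 * y t ^ (n + 2) - 4 * (n + 2) * x t * y t ^ (n + 1)
    + (n + 2) * (n + 1) * x t ^ 2 * y t ^ n) / T ^ 2 with hφ''
  have h1 : ∀ t, HasDerivAt (bump n T) (φ' t) t := fun t => by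
    refine (((hx' t).pow 2).mul ((hy' t).pow (n + 2))).congr_deriv ?_
    simp only [hφ', Pi.pow_apply]
    push_cast
    simp only [pow_one]
    field_simp
    ring
  have h2 : ∀ t, HasDerivAt φ' (φ'' t) t := fun t => by
    refine (((((hx' t).const_mul 2).mul ((hy' t).pow (n + 2))).sub
      ((((hx' t).pow 2).const_mul ((n : ℝ) + 2)).mul ((hy' t).pow (n + 1)))).div_const T).congr_deriv ?_
    simp only [hφ'', Pi.pow_apply]
    push_cast
    simp only [pow_one]
    field_simp
    ring
  rw [integral_mul_wave hw h1 h2 (by rw [hφ'']; fun_prop)]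
  have hb : (bump n T (2 * T) * deriv w (2 * T) - φ' (2 * T) * w (2 * T)) -
      (bump n T T * deriv w T - φ' T * w T) = 0 := by
    simp [bump, hφ', hx, hy]
  rw [hb, add_zero]
  have hwc := hw.continuous
  have hbc := continuous_bump n T
  refine integral_mono_on (by linarith) (Continuous.intervalIntegrable (by rw [hφ'']; fun_prop) _ _)
    (Continuous.intervalIntegrable (by fun_prop) _ _) fun t ht => ?_
  have hx0 : 0 ≤ x t := div_nonneg (by linarith [ht.1]) hT0.le
  have hx1 : x t ≤ 1 := by rw [hx]; simp only; rw [div_le_one hT0]; linarith [ht.2]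
  have hy0 : 0 ≤ y t := div_nonneg (by linarith [ht.2]) hT0.le
  have hy1 : y t ≤ 1 := by rw [hy]; simp only; rw [div_le_one hT0]; linarith [ht.1]
  have hY : 0 ≤ y t ^ n := by positivity
  have e : φ'' t + a * bump n T t = ((2 * y t ^ 2 - 4 * (n + 2) * x t * y t
    + (n + 2) * (n + 1) * x t ^ 2) / T ^ 2 + a * (x t ^ 2 * y t ^ 2)) * y t ^ n := by
    simp only [hφ'', bump]
    change _ + a * (x t ^ 2 * y t ^ (n + 2)) = _
    ring
  have hq : |(2 * y t ^ 2 - 4 * (n + 2) * x t * y t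
    + (n + 2) * (n + 1) * x t ^ 2)| ≤ 2 + 4 * ((n : ℝ) + 2) + ((n : ℝ) + 2) * (n + 1) := by
    have q1 : y t ^ 2 ≤ 1 := pow_le_one₀ hy0 hy1
    have q2 : x t ^ 2 ≤ 1 := pow_le_one₀ hx0 hx1
    have q3 : x t * y t ≤ 1 := mul_le_one₀ hx1 hy0 hy1
    have q4 : 0 ≤ x t * y t := mul_nonneg hx0 hy0
    have m1 : (4 * ((n : ℝ) + 2)) * (x t * y t) ≤ 4 * (n + 2) * 1 := by gcongr
    have m2 : (((n : ℝ) + 2) * (n + 1)) * x t ^ 2 ≤ (n + 2) * (n + 1) * 1 := by gcongr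
    have m3 : 0 ≤ (4 * ((n : ℝ) + 2)) * (x t * y t) := by positivity
    have m4 : 0 ≤ (((n : ℝ) + 2) * (n + 1)) * x t ^ 2 := by positivity
    have m5 : 0 ≤ y t ^ 2 := sq_nonneg _
    rw [abs_le]
    constructor <;> nlinarith
  have hA : |φ'' t + a * bump n T t| ≤ (2 + 4 * (n + 2) + (n + 2) * (n + 1) + a) * y t ^ n := by
    rw [e, abs_mul, abs_of_nonneg hY]
    gcongr
    refine (abs_add_le _ _).trans (add_le_add ?_ ?_)
    · rw [abs_div, abs_of_pos (by positivity : 0 < T ^ 2)]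
      exact (div_le_self (abs_nonneg _) (one_le_pow₀ hT)).trans hq
    · rw [abs_of_nonneg (by positivity)]
      have : x t ^ 2 * y t ^ 2 ≤ 1 := mul_le_one₀ (pow_le_one₀ hx0 hx1) (by positivity)
        (pow_le_one₀ hy0 hy1)
      nlinarith
  calc w t * (φ'' t + a * bump n T t) ≤ |w t| * |φ'' t + a * bump n T t| := by
        rw [← abs_mul]; exact le_abs_self _
    _ ≤ |w t| * ((2 + 4 * (n + 2) + (n + 2) * (n + 1) + a) * y t ^ n) := by gcongr
    _ = _ := by ring

/-! ### Boundedness of the energy -/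

/-- The energy `∫₀ᵀ |w|^p` of a global solution is bounded uniformly in `T`. -/
lemma energy_bounded {γ p a b : ℝ} {w : ℝ → ℝ}
    (hγ : 0 < γ) (hp : 1 < p) (ha : 0 < a) (hb : 0 < b) (hw : ContDiff ℝ 2 w)
    (hineq : ∀ᵐ t ∂(volume.restrict (Set.Ici (0:ℝ))),
      deriv (deriv w) t + a * w t ≥ b * rlInt γ (fun s => |w s| ^ p) t)
    (hpγ : p * (1 - γ) ≤ 1) :
    ∃ C : ℝ, ∀ T : ℝ, 1 ≤ T → ∫ s in (0:ℝ)..T, |w s| ^ p ≤ C := by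
  have hp1 : 0 < p - 1 := by linarith
  -- this choice of `n` ensures `n + 3 + γ ≤ n p`, which Young's inequality needs below
  obtain ⟨n, hn⟩ := exists_nat_ge ((3 + γ) / (p - 1))
  rw [div_le_iff₀ hp1] at hn
  set A : ℝ := 2 + 4 * ((n : ℝ) + 2) + ((n : ℝ) + 2) * (n + 1) + a with hA
  have hA0 : 0 < A := by positivity
  set c₀ : ℝ := (1 / 2) ^ γ * (1 / 4) ^ (n + 2) / 32 with hc₀
  have hc₀0 : 0 < c₀ := by positivity
  have hΓ : 0 < Real.Gamma γ := Real.Gamma_pos_of_pos hγ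
  set B : ℝ := b / Real.Gamma γ * c₀ with hB
  have hB0 : 0 < B := by positivity
  obtain ⟨C, hC0, hC⟩ := exists_young hA0 hB0 hp
  refine ⟨C / B, fun T hT => ?_⟩
  have hT0 : 0 < T := by linarith
  set f : ℝ → ℝ := fun s => |w s| ^ p with hf
  have hwc := hw.continuous
  have hfc : Continuous f := hwc.abs.rpow_const fun _ => Or.inr (by linarith)
  have hf0 : ∀ s, 0 ≤ f s := fun s => Real.rpow_nonneg (abs_nonneg _) _
  set y : ℝ → ℝ := fun t => (2 * T - t) / T with hy
  have hyc : Continuous y := by rw [hy]; fun_prop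
  have hyγ : Continuous fun t => y t ^ γ := hyc.rpow_const fun _ => Or.inr hγ.le
  have hw2c : Continuous (deriv (deriv w)) := by
    have h2 : ContDiff ℝ (1 + 1) w := by simpa [one_add_one_eq_two] using hw
    exact (contDiff_succ_iff_deriv.1 h2).2.2.continuous_deriv (by norm_num)
  obtain ⟨i1, i2, hfub⟩ := fubini_frac hγ hT0.le (by linarith : T ≤ 2 * T) hfc
    (continuous_bump n T)
  set ψ : ℝ → ℝ := fun s => ∫ t in Ioc T (2 * T), bump n T t * truncKer (2 * T) γ (t - s) with hψ
  have s1 : b / Real.Gamma γ * ∫ s in (0:ℝ)..(2 * T), f s * ψ s ≤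
      ∫ t in T..(2 * T), A * (|w t| * y t ^ n) := by
    refine le_trans ?_ (bump_wave_estimate hw ha hT (n := n))
    rw [← hfub, ← intervalIntegral.integral_const_mul]
    refine integral_mono_ae_restrict (by linarith) (i1.const_mul _)
      (((continuous_bump n T).mul (by fun_prop)).intervalIntegrable _ _) ?_
    filter_upwards [ae_restrict_of_ae_restrict_of_subset
      (fun x hx => hT0.le.trans hx.1 : Icc T (2 * T) ⊆ Ici 0) hineq,
      ae_restrict_mem measurableSet_Icc] with t ht htm
    have h0 := bump_nonneg (n := n) hT0 htm.2
    calc b / Real.Gamma γ * (bump n T t * ∫ s in (0:ℝ)..t, (t - s) ^ (γ - 1) * f s)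
        = bump n T t * (b * rlInt γ f t) := by rw [rlInt]; ring
      _ ≤ _ := mul_le_mul_of_nonneg_left ht h0
  have hy01 : ∀ t ∈ Ioo T (2 * T), 0 < y t ∧ y t ≤ 1 := fun t ht =>
    ⟨div_pos (by linarith [ht.2]) hT0, by rw [hy]; simp only; rw [div_le_one hT0]; linarith [ht.1]⟩
  have s2 : ∫ t in T..(2 * T), A * (|w t| * y t ^ n) ≤
      (∫ t in T..(2 * T), B * T ^ γ * (f t * (y t ^ (n + 3) * y t ^ γ))) +
        T * (C * T ^ (-(γ / (p - 1)))) := by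
    have : T * (C * T ^ (-(γ / (p - 1)))) = ∫ t in T..(2 * T), C * T ^ (-(γ / (p - 1))) := by
      rw [intervalIntegral.integral_const, smul_eq_mul]; ring
    rw [this, ← integral_add (Continuous.intervalIntegrable (by fun_prop) _ _)
      (Continuous.intervalIntegrable (by fun_prop) _ _)]
    refine integral_mono_on_of_le_Ioo (by linarith)
      (Continuous.intervalIntegrable (by fun_prop) _ _)
      (Continuous.intervalIntegrable (by fun_prop) _ _) fun t ht => ?_
    obtain ⟨z0, z1⟩ := hy01 t ht
    generalize y t = z at z0 z1
    -- rescaling by `R` removes `T` from the estimate: `R ^ p = R * T ^ γ`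
    set R := T ^ (γ / (p - 1)) with hR
    have hR0 : 0 < R := Real.rpow_pos_of_pos hT0 _
    have hRp : R ^ p = R * T ^ γ := by
      rw [hR, ← Real.rpow_mul hT0.le, ← Real.rpow_add hT0]
      congr 1
      field_simp
      ring
    have hz : (z ^ n) ^ p ≤ z ^ (n + 3) * z ^ γ := by
      rw [← Real.rpow_natCast z n, ← Real.rpow_natCast z (n + 3), ← Real.rpow_mul z0.le,
        ← Real.rpow_add z0]
      refine Real.rpow_le_rpow_of_exponent_ge z0 z1 ?_
      push_cast
      linarith
    have hV := hC (R * (|w t| * z ^ n)) (by positivity)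
    rw [Real.mul_rpow hR0.le (by positivity), Real.mul_rpow (abs_nonneg _) (by positivity),
      hRp] at hV
    rw [Real.rpow_neg hT0.le, ← hR]
    have hV2 : B * (R * T ^ γ * (f t * (z ^ n) ^ p)) ≤
        B * (R * T ^ γ * (f t * (z ^ (n + 3) * z ^ γ))) := by
      have := hf0 t
      gcongr
    have hV3 : R * (A * (|w t| * z ^ n)) ≤
        R * (B * T ^ γ * (f t * (z ^ (n + 3) * z ^ γ)) + C * R⁻¹) := by
      have e : R * (C * R⁻¹) = C := by field_simp
      rw [mul_add, e]
      linarith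
    exact le_of_mul_le_mul_left hV3 hR0
  have s3 : B * T ^ γ * (∫ s in (0:ℝ)..T, f s) +
      (∫ t in T..(2 * T), B * T ^ γ * (f t * (y t ^ (n + 3) * y t ^ γ))) ≤
      b / Real.Gamma γ * ∫ s in (0:ℝ)..(2 * T), f s * ψ s := by
    have j1 : IntervalIntegrable (fun s => f s * ψ s) volume 0 T :=
      i2.mono_set (uIcc_subset_uIcc_left (by rw [uIcc_of_le (by linarith)]; exact ⟨hT0.le, by linarith⟩))
    have j2 : IntervalIntegrable (fun s => f s * ψ s) volume T (2 * T) :=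
      i2.mono_set (uIcc_subset_uIcc_right (by rw [uIcc_of_le (by linarith)]; exact ⟨hT0.le, by linarith⟩))
    -- on `[0, T]` the lower bound is used with `z = 1`, on `[T, 2T]` with `z = y s`
    rw [← integral_add_adjacent_intervals j1 j2, mul_add]
    rw [← intervalIntegral.integral_const_mul, ← intervalIntegral.integral_const_mul,
      ← intervalIntegral.integral_const_mul]
    refine add_le_add ?_ ?_
    · refine integral_mono_on hT0.le (Continuous.intervalIntegrable (by fun_prop) _ _)
        (j1.const_mul _) fun s hs => ?_
      have := adjoint_bump_lower n hγ hT0 hs.1 one_pos le_rfl (by linarith [hs.2])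
      simp only [one_pow, Real.one_rpow, mul_one] at this
      calc B * T ^ γ * f s = b / Real.Gamma γ * (f s * (c₀ * T ^ γ)) := by rw [hB]; ring
        _ ≤ _ := by have := hf0 s; gcongr
    · refine integral_mono_on_of_le_Ioo (by linarith)
        (Continuous.intervalIntegrable (by fun_prop) _ _) (j2.const_mul _) fun s hs => ?_
      have := adjoint_bump_lower n hγ hT0 (hT0.le.trans hs.1.le) (hy01 s hs).1 (hy01 s hs).2
        (by simp only [hy]; field_simp; linarith)
      calc B * T ^ γ * (f s * (y s ^ (n + 3) * y s ^ γ))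
          = b / Real.Gamma γ * (f s * (c₀ * T ^ γ * (y s ^ (n + 3) * y s ^ γ))) := by rw [hB]; ring
        _ ≤ _ := by have := hf0 s; gcongr
  have s4 : T * T ^ (-(γ / (p - 1))) ≤ T ^ γ := by
    nth_rewrite 1 [← Real.rpow_one T]
    rw [← Real.rpow_add hT0]
    refine Real.rpow_le_rpow_of_exponent_le hT ?_
    have : 1 - γ ≤ γ / (p - 1) := by rw [le_div_iff₀ hp1]; nlinarith
    linarith
  have hTγ : 0 < T ^ γ := Real.rpow_pos_of_pos hT0 _
  rw [le_div_iff₀ hB0]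
  have s5 : T ^ γ * ((∫ s in (0:ℝ)..T, f s) * B) ≤ T ^ γ * C := by nlinarith
  exact le_of_mul_le_mul_left s5 hTγ

/-! ### Lower bound over a half period -/

/-- Testing against `sin (√a (r - t))` over the half period `[t, t + τ]`, `τ = π/√a`: the test
function is nonnegative and solves `φ'' + aφ = 0`, so only the values of `w` at the two endpoints
survive. -/
lemma half_period_lower {γ p a b : ℝ} {w : ℝ → ℝ}
    (hγ : 0 < γ) (hp : 1 < p) (ha : 0 < a) (hb : 0 < b) (hw : ContDiff ℝ 2 w)
    (hineq : ∀ᵐ t ∂(volume.restrict (Set.Ici (0:ℝ))),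
      deriv (deriv w) t + a * w t ≥ b * rlInt γ (fun s => |w s| ^ p) t)
    (hpγ : p * (1 - γ) ≤ 1) :
    ∃ c τ : ℝ, 0 < c ∧ 0 < τ ∧ ∀ t : ℝ, 0 ≤ t →
      c * (t + τ) ^ (-(1 / p)) * (∫ s in (0:ℝ)..t, |w s| ^ p) ≤ w t + w (t + τ) := by
  set q := √a with hq
  have hq0 : 0 < q := Real.sqrt_pos.2 ha
  have hqq : q * q = a := Real.mul_self_sqrt ha.le
  set τ := Real.pi / q with hτ
  have hτ0 : 0 < τ := div_pos Real.pi_pos hq0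
  have hqτ : q * τ = Real.pi := by rw [hτ]; field_simp
  have hΓ : 0 < Real.Gamma γ := Real.Gamma_pos_of_pos hγ
  have hp0 : 0 < p := by linarith
  have hδ : 0 ≤ γ - 1 + 1 / p := by
    have : 1 - γ ≤ 1 / p := by rw [le_div_iff₀ hp0]; linarith
    linarith
  refine ⟨b / Real.Gamma γ * (τ / 2) ^ (γ - 1 + 1 / p) / a, τ, by positivity, hτ0, fun t ht => ?_⟩
  set f : ℝ → ℝ := fun s => |w s| ^ p with hf
  have hwc := hw.continuous
  have hfc : Continuous f := hwc.abs.rpow_const fun _ => Or.inr hp0.le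
  have hf0 : ∀ s, 0 ≤ f s := fun s => Real.rpow_nonneg (abs_nonneg _) _
  have hw2c : Continuous (deriv (deriv w)) := by
    have h2 : ContDiff ℝ (1 + 1) w := by simpa [one_add_one_eq_two] using hw
    exact (contDiff_succ_iff_deriv.1 h2).2.2.continuous_deriv (by norm_num)
  set F := ∫ s in (0:ℝ)..t, f s with hF
  have hF0 : 0 ≤ F := integral_nonneg ht fun s _ => hf0 s
  set K := (τ / 2) ^ (γ - 1 + 1 / p) * (t + τ) ^ (-(1 / p)) with hK
  have hrl0 : ∀ r, 0 ≤ r → 0 ≤ rlInt γ f r := fun r hr =>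
    mul_nonneg (by positivity) (integral_nonneg hr fun s hs =>
      mul_nonneg (Real.rpow_nonneg (by linarith [hs.2]) _) (hf0 s))
  have hrl : ∀ r ∈ Icc (t + τ / 2) (t + τ), 1 / Real.Gamma γ * (K * F) ≤ rlInt γ f r := by
    intro r hr
    have hr1 := hr.1
    have hr2 := hr.2
    have hint : IntervalIntegrable (fun s => (r - s) ^ (γ - 1) * f s) volume 0 r := by
      have h := (intervalIntegral.intervalIntegrable_rpow' (a := r) (b := 0) (r := γ - 1)
        (by linarith)).comp_sub_left r
      simp only [sub_self, sub_zero] at h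
      exact h.mul_continuousOn hfc.continuousOn
    have hint1 : IntervalIntegrable (fun s => (r - s) ^ (γ - 1) * f s) volume 0 t :=
      hint.mono_set (uIcc_subset_uIcc_left (by rw [uIcc_of_le (by linarith)]; exact ⟨ht, by linarith⟩))
    unfold rlInt
    refine mul_le_mul_of_nonneg_left ?_ (by positivity)
    calc K * F = ∫ s in (0:ℝ)..t, K * f s := (intervalIntegral.integral_const_mul _ _).symm
      _ ≤ ∫ s in (0:ℝ)..t, (r - s) ^ (γ - 1) * f s := by
        refine integral_mono_on ht (Continuous.intervalIntegrable (by fun_prop) _ _) hint1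
          fun s hs => mul_le_mul_of_nonneg_right ?_ (hf0 s)
        have hs1 := hs.1
        have hs2 := hs.2
        have h0 : 0 < r - s := by linarith
        -- here `τ / 2 ≤ r - s ≤ t + τ`; both exponents in the splitting have a definite sign
        have : (r - s) ^ (γ - 1) = (r - s) ^ (γ - 1 + 1 / p) * (r - s) ^ (-(1 / p)) := by
          rw [← Real.rpow_add h0]; ring_nf
        rw [this, hK]
        refine mul_le_mul (Real.rpow_le_rpow (by positivity) (by linarith) hδ)
          (Real.rpow_le_rpow_of_nonpos h0 (by linarith) ?_) (by positivity) (by positivity)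
        rw [neg_nonpos]; positivity
      _ ≤ _ := by
        refine integral_mono_interval le_rfl ht (by linarith) ?_ hint
        filter_upwards [ae_restrict_mem measurableSet_Ioc] with s hs
        exact mul_nonneg (Real.rpow_nonneg (by linarith [hs.2]) _) (hf0 s)
  set φ : ℝ → ℝ := fun r => Real.sin (q * (r - t)) with hφ
  have hφc : Continuous φ := by rw [hφ]; fun_prop
  have hl : ∀ r, HasDerivAt (fun r => q * (r - t)) q r := fun r => by
    simpa using ((hasDerivAt_id r).sub_const t).const_mul q
  have h1 : ∀ r, HasDerivAt φ (q * Real.cos (q * (r - t))) r := fun r =>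
    (hl r).sin.congr_deriv (by ring)
  have h2 : ∀ r, HasDerivAt (fun r => q * Real.cos (q * (r - t))) (-a * φ r) r := fun r =>
    ((hl r).cos.const_mul q).congr_deriv (by rw [← hqq]; simp only [hφ]; ring)
  have key := integral_mul_wave (a := a) (S := t) (E := t + τ) hw h1 h2 (by fun_prop)
  have z0 : ∫ r in t..(t + τ), w r * (-a * φ r + a * φ r) = 0 := by simp
  have z1 : φ (t + τ) = 0 := by simp [hφ, hqτ]
  have z2 : φ t = 0 := by simp [hφ]
  rw [z0, z1, z2] at key
  simp only [add_sub_cancel_left, hqτ, sub_self, mul_zero, Real.cos_pi, Real.cos_zero] at key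
  have hφ0 : ∀ r ∈ Icc t (t + τ), 0 ≤ φ r := fun r hr =>
    Real.sin_nonneg_of_nonneg_of_le_pi (mul_nonneg hq0.le (by linarith [hr.1]))
      (by rw [← hqτ]; exact mul_le_mul_of_nonneg_left (by linarith [hr.2]) hq0.le)
  have hic : Continuous fun r => φ r * (deriv (deriv w) r + a * w r) := by fun_prop
  rw [← integral_add_adjacent_intervals (hic.intervalIntegrable t (t + τ / 2))
    (hic.intervalIntegrable (t + τ / 2) (t + τ))] at key
  -- the first half of the period is discarded, so that `r - s ≥ τ / 2` on the rest
  have p1 : 0 ≤ ∫ r in t..(t + τ / 2), φ r * (deriv (deriv w) r + a * w r) := by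
    refine integral_nonneg_of_ae_restrict (by linarith) ?_
    filter_upwards [ae_restrict_of_ae_restrict_of_subset
      (fun x hx => ht.trans hx.1 : Icc t (t + τ / 2) ⊆ Ici 0) hineq,
      ae_restrict_mem measurableSet_Icc] with r hr hrm
    exact mul_nonneg (hφ0 r ⟨hrm.1, by linarith [hrm.2]⟩)
      ((mul_nonneg hb.le (hrl0 r (ht.trans hrm.1))).trans hr)
  have p2 : ∫ r in (t + τ / 2)..(t + τ), φ r * (b * (1 / Real.Gamma γ * (K * F))) ≤
      ∫ r in (t + τ / 2)..(t + τ), φ r * (deriv (deriv w) r + a * w r) := by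
    refine integral_mono_ae_restrict (by linarith)
      (Continuous.intervalIntegrable (by fun_prop) _ _) (hic.intervalIntegrable _ _) ?_
    filter_upwards [ae_restrict_of_ae_restrict_of_subset
      (fun x hx => le_trans (by linarith) hx.1 : Icc (t + τ / 2) (t + τ) ⊆ Ici 0) hineq,
      ae_restrict_mem measurableSet_Icc] with r hr hrm
    exact mul_le_mul_of_nonneg_left
      ((mul_le_mul_of_nonneg_left (hrl r hrm) hb.le).trans hr)
      (hφ0 r ⟨by linarith [hrm.1], hrm.2⟩)
  have p3 : ∫ r in (t + τ / 2)..(t + τ), φ r = 1 / q := by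
    rw [integral_eq_sub_of_hasDerivAt (f := fun r => -Real.cos (q * (r - t)) / q)
      (fun r _ => ((hl r).cos.neg.div_const q).congr_deriv (by simp only [hφ]; field_simp))
      (hφc.intervalIntegrable _ _)]
    have : q * (τ / 2) = Real.pi / 2 := by rw [← hqτ]; ring
    simp [hqτ, this]
  rw [intervalIntegral.integral_mul_const, p3] at p2
  have p4 : 1 / q * (b * (1 / Real.Gamma γ * (K * F))) ≤ q * (w t + w (t + τ)) := by linarith
  have p5 : 1 / q * (1 / q * (b * (1 / Real.Gamma γ * (K * F)))) ≤
      1 / q * (q * (w t + w (t + τ))) := mul_le_mul_of_nonneg_left p4 (by positivity)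
  calc _ = 1 / q * (1 / q * (b * (1 / Real.Gamma γ * (K * F)))) := by
        rw [← hqq, hK]; field_simp
    _ ≤ _ := p5
    _ = _ := by field_simp

/-! ### Divergence of the energy -/

/-- Corollary 2.6 (iv): if p(1−γ) ≤ 1, then no nontrivial global solution of w'' + a w ≥ b ₀I_t^γ |w|^p exists on [0,∞). -/
theorem blowup_wave
    (γ p a b : ℝ) (w : ℝ → ℝ)
    (hγ : 0 < γ) (hp : 1 < p) (ha : 0 < a) (hb : 0 < b)
    (hw : ContDiff ℝ 2 w)
    (hw0 : ∃ t : ℝ, 0 ≤ t ∧ w t ≠ 0)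
    (hineq : ∀ᵐ t ∂(volume.restrict (Set.Ici (0:ℝ))),
      deriv (deriv w) t + a * w t ≥ b * rlInt γ (fun s => |w s| ^ p) t)
    (hpγ : p * (1 - γ) ≤ 1) :
    False := by
  obtain ⟨C, hC⟩ := energy_bounded hγ hp ha hb hw hineq hpγ
  obtain ⟨c, τ, hc, hτ, hlow⟩ := half_period_lower hγ hp ha hb hw hineq hpγ
  obtain ⟨t₀, ht₀, hwt⟩ := hw0
  have hp0 : 0 < p := by linarith
  set f : ℝ → ℝ := fun s => |w s| ^ p with hf
  have hwc := hw.continuous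
  have hfc : Continuous f := hwc.abs.rpow_const fun _ => Or.inr hp0.le
  have hf0 : ∀ s, 0 ≤ f s := fun s => Real.rpow_nonneg (abs_nonneg _) _
  have hfi : ∀ x y, IntervalIntegrable f volume x y := fun x y => hfc.intervalIntegrable x y
  set t₁ := t₀ + 1 with ht₁
  have ht₁0 : 0 < t₁ := by linarith
  set m := ∫ s in (0:ℝ)..t₁, f s with hm
  have hm0 : 0 < m := integral_pos ht₁0 hfc.continuousOn (fun s _ => hf0 s)
    ⟨t₀, ⟨ht₀, by linarith⟩, Real.rpow_pos_of_pos (abs_pos.2 hwt) _⟩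
  have hpt : ∀ t, t₁ ≤ t → (c * m) ^ p * (t + τ)⁻¹ ≤ 2 ^ p * (f t + f (t + τ)) := by
    intro t ht
    have htτ : 0 < t + τ := by linarith
    have hmono : m ≤ ∫ s in (0:ℝ)..t, f s :=
      integral_mono_interval le_rfl ht₁0.le ht (ae_of_all _ hf0) (hfi _ _)
    have h1 : c * m * (t + τ) ^ (-(1 / p)) ≤ w t + w (t + τ) := by
      refine le_trans ?_ (hlow t (by linarith))
      have : 0 ≤ c * (t + τ) ^ (-(1 / p)) := by positivity
      nlinarith [mul_le_mul_of_nonneg_left hmono this]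
    have h2 : w t + w (t + τ) ≤ 2 * max |w t| |w (t + τ)| := by
      have := (le_abs_self (w t)).trans (le_max_left |w t| |w (t + τ)|)
      have := (le_abs_self (w (t + τ))).trans (le_max_right |w t| |w (t + τ)|)
      linarith
    have h3 := Real.rpow_le_rpow (by positivity) (h1.trans h2) hp0.le
    rw [Real.mul_rpow (by positivity) (by positivity), ← Real.rpow_mul htτ.le,
      Real.mul_rpow zero_le_two (le_max_of_le_left (abs_nonneg (w t))),
      show -(1 / p) * p = -1 by field_simp, Real.rpow_neg_one] at h3
    have h20 : (0:ℝ) ≤ 2 ^ p := by positivity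
    refine h3.trans (mul_le_mul_of_nonneg_left ?_ h20)
    rcases max_choice |w t| |w (t + τ)| with h | h <;> rw [h]
    · exact le_add_of_nonneg_right (hf0 _)
    · exact le_add_of_nonneg_left (hf0 _)
  have hlog : ∀ R, t₁ ≤ R →
      (c * m) ^ p * Real.log ((R + τ) / (t₁ + τ)) ≤ 2 ^ p * (C + C) := by
    intro R hR
    have e1 : ∫ t in t₁..R, (c * m) ^ p * (t + τ)⁻¹ =
        (c * m) ^ p * Real.log ((R + τ) / (t₁ + τ)) := by
      rw [intervalIntegral.integral_const_mul,
        intervalIntegral.integral_comp_add_right (fun x => x⁻¹),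
        integral_inv_of_pos (by linarith) (by linarith)]
    have e2 : ∫ t in t₁..R, 2 ^ p * (f t + f (t + τ)) ≤ 2 ^ p * (C + C) := by
      rw [intervalIntegral.integral_const_mul, integral_add (hfi _ _)
        (Continuous.intervalIntegrable (by fun_prop) _ _),
        intervalIntegral.integral_comp_add_right f]
      have g1 : ∫ t in t₁..R, f t ≤ ∫ t in (0:ℝ)..R, f t :=
        integral_mono_interval ht₁0.le hR le_rfl (ae_of_all _ hf0) (hfi _ _)
      have g2 : ∫ t in (t₁ + τ)..(R + τ), f t ≤ ∫ t in (0:ℝ)..(R + τ), f t :=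
        integral_mono_interval (by linarith) (by linarith) le_rfl (ae_of_all _ hf0) (hfi _ _)
      have g3 := hC R (by linarith)
      have g4 := hC (R + τ) (by linarith)
      exact mul_le_mul_of_nonneg_left (by linarith) (by positivity)
    rw [← e1]
    refine le_trans (integral_mono_on hR ?_ (Continuous.intervalIntegrable (by fun_prop) _ _)
      fun t ht => hpt t ht.1) e2
    refine ContinuousOn.intervalIntegrable ?_
    rw [uIcc_of_le hR]
    have hne : ∀ t ∈ Icc t₁ R, t + τ ≠ 0 := fun t ht =>
      (add_pos (ht₁0.trans_le ht.1) hτ).ne'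
    exact continuousOn_const.mul (ContinuousOn.inv₀ (by fun_prop) hne)
  have hcm : 0 < (c * m) ^ p := by positivity
  have htend : Tendsto (fun R => (c * m) ^ p * Real.log ((R + τ) / (t₁ + τ))) atTop atTop :=
    (Real.tendsto_log_atTop.comp ((tendsto_atTop_add_const_right _ τ tendsto_id).atTop_div_const
      (by linarith))).const_mul_atTop hcm
  obtain ⟨R, hR1, hR2⟩ := ((htend.eventually_gt_atTop (2 ^ p * (C + C))).and
    (eventually_ge_atTop t₁)).exists
  exact absurd (hlog R hR2) (not_le.2 hR1)
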